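/- Let Σ be a real symmetric positive definite n×n matrix, σ > 0, and let A := I_n + σ^{−2}·Σ, with eigenvalues λ_1 ≥ λ_2 ≥ ⋯ ≥ λ_n > 1. For S ⊆ {1,…,n}, let A_S denote the principal submatrix of A with rows and columns indexed by S and define F(S) := det(A_S), with F(∅) := 1. Then for every integer K with 1 ≤ K ≤ n and all S, Ω ⊆ {1,…,n} with |Ω \ S| ≤ K and Ω \ S nonempty: Σ_{ω ∈ Ω\S} (F(S ∪ {ω}) − F(S)) ≥ (K·(λ_n − 1) / (Π_{j=1}^{K} λ_j − 1))·(F(S ∪ Ω) − F(S)). In particular the greedy submodularity ratio of F for budget K is at least K(λ_n − 1)/(Π_{j=1}^{K} λ_j − 1). -/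

import Mathlib

open Finset Matrix Polynomial

/-- The matrix `A = I_n + σ⁻²·Σ`. -/
noncomputable def detMat (n : ℕ) (σ : ℝ) (Sig : Matrix (Fin n) (Fin n) ℝ) :
    Matrix (Fin n) (Fin n) ℝ :=
  (1 : Matrix (Fin n) (Fin n) ℝ) + (σ ^ 2)⁻¹ • Sig

/-- The determinantal objective `F(S) = det(A_S)`, where `A_S` is the principal
submatrix of `A = I_n + σ⁻²·Σ` with rows and columns indexed by `S`
(for `S = ∅` this is the determinant of the empty matrix, namely `1`). -/
noncomputable def detObjA (n : ℕ) (σ : ℝ) (Sig : Matrix (Fin n) (Fin n) ℝ)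
    (S : Finset (Fin n)) : ℝ :=
  Matrix.det ((detMat n σ Sig).submatrix
    (fun i : S => (i : Fin n)) (fun j : S => (j : Fin n)))

section HermitianMatrices

variable {ι κ : Type*} [Fintype ι] [DecidableEq ι] [Fintype κ] [DecidableEq κ]

/-- The function `f` applied to the eigenvalues of a real symmetric matrix. -/
noncomputable def Matrix.IsHermitian.spectralMap {A : Matrix ι ι ℝ} (hA : A.IsHermitian)
    (f : ℝ → ℝ) : Matrix ι ι ℝ :=
  (hA.eigenvectorUnitary : Matrix ι ι ℝ) * diagonal (fun i => f (hA.eigenvalues i)) *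
    star (hA.eigenvectorUnitary : Matrix ι ι ℝ)

theorem Matrix.IsHermitian.spectralMap_id {A : Matrix ι ι ℝ} (hA : A.IsHermitian) :
    hA.spectralMap id = A := by
  conv_rhs => rw [hA.spectral_theorem, Unitary.conjStarAlgAut_apply]
  rfl

theorem Matrix.IsHermitian.spectralMap_const {A : Matrix ι ι ℝ} (hA : A.IsHermitian) (c : ℝ) :
    hA.spectralMap (fun _ => c) = c • (1 : Matrix ι ι ℝ) := by
  rw [IsHermitian.spectralMap, ← smul_one_eq_diagonal, Matrix.mul_smul, Matrix.smul_mul,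
    Matrix.mul_one, Unitary.mul_star_self_of_mem hA.eigenvectorUnitary.2]

theorem Matrix.IsHermitian.det_spectralMap {A : Matrix ι ι ℝ} (hA : A.IsHermitian) (f : ℝ → ℝ) :
    (hA.spectralMap f).det = ∏ i, f (hA.eigenvalues i) := by
  rw [IsHermitian.spectralMap, det_mul_right_comm,
    Unitary.mul_star_self_of_mem hA.eigenvectorUnitary.2, Matrix.one_mul,
    det_diagonal]

theorem Matrix.IsHermitian.posSemidef_spectralMap_sub {A : Matrix ι ι ℝ} (hA : A.IsHermitian)
    {f g : ℝ → ℝ} (hfg : ∀ i, f (hA.eigenvalues i) ≤ g (hA.eigenvalues i)) :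
    (hA.spectralMap g - hA.spectralMap f).PosSemidef := by
  rw [IsHermitian.spectralMap, IsHermitian.spectralMap, ← Matrix.sub_mul, ← Matrix.mul_sub,
    diagonal_sub]
  exact (PosSemidef.diagonal fun i => sub_nonneg.2 (hfg i)).mul_mul_conjTranspose_same _

theorem Matrix.IsHermitian.le_eigenvalues {A : Matrix ι ι ℝ} (hA : A.IsHermitian) {c : ℝ}
    (h : (A - c • (1 : Matrix ι ι ℝ)).PosSemidef) (i : ι) : c ≤ hA.eigenvalues i := by
  have hq := h.conjTranspose_mul_mul_same (hA.eigenvectorUnitary : Matrix ι ι ℝ)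
  have hU : (hA.eigenvectorUnitary : Matrix ι ι ℝ)ᴴ * (hA.eigenvectorUnitary : Matrix ι ι ℝ) = 1 :=
    Unitary.star_mul_self_of_mem hA.eigenvectorUnitary.2
  have hdiag : (hA.eigenvectorUnitary : Matrix ι ι ℝ)ᴴ * (A - c • (1 : Matrix ι ι ℝ)) *
      (hA.eigenvectorUnitary : Matrix ι ι ℝ) = diagonal hA.eigenvalues - c • 1 := by
    have h1 : (hA.eigenvectorUnitary : Matrix ι ι ℝ)ᴴ * A * (hA.eigenvectorUnitary : Matrix ι ι ℝ) =
        diagonal hA.eigenvalues := by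
      have := hA.conjStarAlgAut_star_eigenvectorUnitary
      rw [Unitary.conjStarAlgAut_star_apply] at this
      exact this
    rw [Matrix.mul_sub, Matrix.sub_mul, h1, Matrix.mul_smul, Matrix.smul_mul, Matrix.mul_one, hU]
  rw [hdiag] at hq
  simpa using hq.diag_nonneg (i := i)

theorem Matrix.one_le_det_one_add {E : Matrix ι ι ℝ} (hE : E.PosSemidef) : 1 ≤ (1 + E).det := by
  have hH : (1 + E).IsHermitian := (PosSemidef.one.add hE).isHermitian
  rw [hH.det_eq_prod_eigenvalues]
  refine Finset.one_le_prod fun i _ => hH.le_eigenvalues ?_ i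
  simpa using hE

open scoped MatrixOrder in
theorem Matrix.PosDef.det_le_det {A B : Matrix ι ι ℝ} (hA : A.PosDef) (h : (B - A).PosSemidef) :
    A.det ≤ B.det := by
  obtain ⟨P, hP⟩ :=
    CStarAlgebra.nonneg_iff_eq_star_mul_self.1 (nonneg_iff_posSemidef.2 hA.posSemidef)
  have hdet : IsUnit P.det := by
    have := hA.det_pos.ne'
    rw [hP, det_mul] at this
    exact (right_ne_zero_of_mul this).isUnit
  have hE := h.conjTranspose_mul_mul_same P⁻¹
  have hB : B = Pᴴ * (1 + P⁻¹ᴴ * (B - A) * P⁻¹) * P := by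
    have h1 : Pᴴ * P⁻¹ᴴ = 1 := by
      rw [← conjTranspose_mul, nonsing_inv_mul _ hdet, conjTranspose_one]
    have h2 : Pᴴ * P = A := hP.symm
    rw [Matrix.mul_add, Matrix.add_mul, Matrix.mul_one, h2, Matrix.mul_assoc _ _ P,
      Matrix.mul_assoc _ _ P, nonsing_inv_mul _ hdet, Matrix.mul_one, ← Matrix.mul_assoc, h1,
      Matrix.one_mul, add_sub_cancel]
  have hAdet : A.det = P.det * P.det := by
    rw [hP, det_mul, star_eq_conjTranspose, det_conjTranspose, star_trivial]
  rw [hB, det_mul, det_mul, det_conjTranspose, star_trivial, hAdet]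
  nlinarith [one_le_det_one_add hE, mul_self_nonneg P.det]

omit [Fintype ι] in
theorem Matrix.posDef_of_posSemidef_sub_smul_one {A : Matrix ι ι ℝ} {c : ℝ} (hc : 0 < c)
    (h : (A - c • (1 : Matrix ι ι ℝ)).PosSemidef) : A.PosDef := by
  simpa using PosDef.posSemidef_add h (PosDef.one.smul hc)

omit [Fintype ι] [Fintype κ] in
/-- Compressing to a smaller index set preserves the lower bound `c` on the spectrum. -/
theorem Matrix.posSemidef_submatrix_sub_smul_one {A : Matrix ι ι ℝ} {c : ℝ}
    (h : (A - c • (1 : Matrix ι ι ℝ)).PosSemidef) {e : κ → ι} (he : Function.Injective e) :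
    (A.submatrix e e - c • (1 : Matrix κ κ ℝ)).PosSemidef := by
  have hs : (A - c • (1 : Matrix ι ι ℝ)).submatrix e e =
      A.submatrix e e - c • (1 : Matrix κ κ ℝ) := by
    rw [← submatrix_one e he]
    rfl
  exact hs ▸ h.submatrix e

theorem Matrix.pow_card_le_det {A : Matrix ι ι ℝ} {c : ℝ} (hc : 0 < c)
    (h : (A - c • (1 : Matrix ι ι ℝ)).PosSemidef) : c ^ Fintype.card ι ≤ A.det := by
  simpa using (PosDef.one.smul hc).det_le_det h

theorem Matrix.det_fromBlocks_eq_mul {A : Matrix ι ι ℝ} {B : Matrix ι κ ℝ} {C : Matrix κ ι ℝ}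
    {D : Matrix κ κ ℝ} (hA : A.PosDef) :
    (fromBlocks A B C D).det = A.det * (D - C * A⁻¹ * B).det := by
  have := hA.isUnit.invertible
  rw [det_fromBlocks₁₁, invOf_eq_nonsing_inv]

theorem Matrix.posSemidef_schur_sub_smul_one {A : Matrix ι ι ℝ} {B : Matrix ι κ ℝ}
    {D : Matrix κ κ ℝ} {c : ℝ} (hc : 0 < c)
    (h : (fromBlocks A B Bᴴ D - c • (1 : Matrix (ι ⊕ κ) (ι ⊕ κ) ℝ)).PosSemidef) :
    (D - Bᴴ * A⁻¹ * B - c • (1 : Matrix κ κ ℝ)).PosSemidef := by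
  have hA : A.PosDef := posDef_of_posSemidef_sub_smul_one hc
    (posSemidef_submatrix_sub_smul_one h Sum.inl_injective)
  have := hA.isUnit.invertible
  have hI : (fromBlocks (c • (1 : Matrix ι ι ℝ)) 0 0 (0 : Matrix κ κ ℝ)).PosSemidef := by
    have hd : fromBlocks (c • (1 : Matrix ι ι ℝ)) 0 0 (0 : Matrix κ κ ℝ) =
        diagonal (Sum.elim (fun _ => c) (fun _ => 0)) := by
      rw [smul_one_eq_diagonal, ← diagonal_zero, fromBlocks_diagonal]
    rw [hd]
    refine PosSemidef.diagonal fun i => ?_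
    cases i <;> simp [hc.le]
  have hsum := h.add hI
  have hblock : fromBlocks A B Bᴴ D - c • (1 : Matrix (ι ⊕ κ) (ι ⊕ κ) ℝ) +
      fromBlocks (c • (1 : Matrix ι ι ℝ)) 0 0 (0 : Matrix κ κ ℝ) =
      fromBlocks A B Bᴴ (D - c • (1 : Matrix κ κ ℝ)) := by
    rw [← fromBlocks_one, fromBlocks_smul, sub_eq_add_neg, fromBlocks_neg, fromBlocks_add,
      fromBlocks_add]
    simp [sub_eq_add_neg]
  rw [hblock, hA.fromBlocks₁₁] at hsum
  rwa [sub_right_comm]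

omit [Fintype ι] [DecidableEq ι] in
theorem Matrix.IsHermitian.submatrix_sumElim {A : Matrix ι ι ℝ} (hA : A.IsHermitian)
    {α β : Type*} (f : α → ι) (g : β → ι) :
    A.submatrix (Sum.elim f g) (Sum.elim f g) =
      Matrix.fromBlocks (A.submatrix f f) (A.submatrix f g) (A.submatrix f g)ᴴ (A.submatrix g g) := by
  rw [conjTranspose_submatrix, hA.eq]
  ext (i | i) (j | j) <;> rfl

/-- The Schur complement of the principal block indexed by `f` in the block matrix indexed by
`Sum.elim f g`. -/
noncomputable def Matrix.schurComplement (A : Matrix ι ι ℝ) {α β : Type*} [Fintype α]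
    [DecidableEq α] (f : α → ι) (g : β → ι) : Matrix β β ℝ :=
  A.submatrix g g - (A.submatrix f g)ᴴ * (A.submatrix f f)⁻¹ * A.submatrix f g

omit [Fintype ι] [DecidableEq ι] in
theorem Matrix.PosDef.det_submatrix_sumElim {A : Matrix ι ι ℝ} (hA : A.PosDef) {α β : Type*}
    [Fintype α] [DecidableEq α] [Fintype β] [DecidableEq β] {f : α → ι}
    (hf : Function.Injective f) (g : β → ι) :
    (A.submatrix (Sum.elim f g) (Sum.elim f g)).det =
      (A.submatrix f f).det * (A.schurComplement f g).det := by
  rw [hA.isHermitian.submatrix_sumElim, det_fromBlocks_eq_mul (hA.submatrix hf)]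
  rfl

omit [Fintype ι] in
theorem Matrix.posSemidef_schurComplement_sub_smul_one {A : Matrix ι ι ℝ} {c : ℝ} (hc : 0 < c)
    (h : (A - c • (1 : Matrix ι ι ℝ)).PosSemidef) {α β : Type*} [Fintype α] [DecidableEq α]
    [Fintype β] [DecidableEq β] {f : α → ι} {g : β → ι}
    (hfg : Function.Injective (Sum.elim f g)) :
    (A.schurComplement f g - c • (1 : Matrix β β ℝ)).PosSemidef := by
  have hN := posSemidef_submatrix_sub_smul_one h hfg
  rw [(posDef_of_posSemidef_sub_smul_one hc h).isHermitian.submatrix_sumElim] at hN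
  exact posSemidef_schur_sub_smul_one hc hN

omit [Fintype ι] [DecidableEq ι] in
theorem Matrix.PosDef.posSemidef_sub_schurComplement {A : Matrix ι ι ℝ} (hA : A.PosDef)
    {α β : Type*} [Fintype α] [DecidableEq α] [Finite β] {f : α → ι}
    (hf : Function.Injective f) (g : β → ι) :
    (A.submatrix g g - A.schurComplement f g).PosSemidef := by
  rw [schurComplement, sub_sub_cancel]
  exact (hA.submatrix hf).inv.posSemidef.conjTranspose_mul_mul_same _

omit [Fintype ι] in
theorem Matrix.mul_pow_card_le_det_submatrix_sumElim {A : Matrix ι ι ℝ} {c : ℝ} (hc : 0 < c)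
    (h : (A - c • (1 : Matrix ι ι ℝ)).PosSemidef) {α β : Type*} [Fintype α] [DecidableEq α]
    [Fintype β] [DecidableEq β] {f : α → ι} {g : β → ι}
    (hfg : Function.Injective (Sum.elim f g)) :
    (A.submatrix f f).det * c ^ Fintype.card β ≤
      (A.submatrix (Sum.elim f g) (Sum.elim f g)).det := by
  have hA := posDef_of_posSemidef_sub_smul_one hc h
  have hf : Function.Injective f := hfg.comp Sum.inl_injective
  rw [hA.det_submatrix_sumElim hf]
  exact mul_le_mul_of_nonneg_left
    (pow_card_le_det hc (posSemidef_schurComplement_sub_smul_one hc h hfg))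
    (hA.submatrix hf).det_pos.le

theorem Matrix.PosDef.log_det_le_trace_sub {A : Matrix ι ι ℝ} (hA : A.PosDef) :
    Real.log A.det ≤ A.trace - Fintype.card ι := by
  rw [hA.isHermitian.det_eq_prod_eigenvalues, hA.isHermitian.trace_eq_sum_eigenvalues,
    Fintype.card_eq_sum_ones, Nat.cast_sum, ← Finset.sum_sub_distrib]
  simp only [RCLike.ofReal_real_eq_id, id_eq, Nat.cast_one]
  rw [Real.log_prod fun i _ => (hA.eigenvalues_pos i).ne']
  exact Finset.sum_le_sum fun i _ => Real.log_le_sub_one_of_pos (hA.eigenvalues_pos i)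

theorem Matrix.PosDef.det_sub_one_le {A : Matrix ι ι ℝ} (hA : A.PosDef) :
    A.det - 1 ≤ (A.trace - Fintype.card ι) * A.det := by
  have h := (Real.one_sub_inv_le_log_of_pos hA.det_pos).trans hA.log_det_le_trace_sub
  have := mul_le_mul_of_nonneg_right h hA.det_pos.le
  rwa [sub_mul, inv_mul_cancel₀ hA.det_pos.ne', one_mul] at this

theorem Matrix.IsHermitian.map_eigenvalues_eq_of_charpoly {A : Matrix ι ι ℝ}
    (hA : A.IsHermitian) {lam : ι → ℝ} (h : A.charpoly = ∏ i, (X - C (lam i))) :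
    Multiset.map hA.eigenvalues Finset.univ.val = Multiset.map lam Finset.univ.val := by
  have h1 := hA.roots_charpoly_eq_eigenvalues
  have h2 : ∏ i, (X - C (lam i)) =
      (Multiset.map (fun a => X - C a) (Multiset.map lam Finset.univ.val)).prod := by
    rw [Multiset.map_map]
    rfl
  rw [h, h2, roots_multiset_prod_X_sub_C] at h1
  exact h1.symm

theorem Matrix.IsHermitian.prod_eigenvalues_eq_of_charpoly {A : Matrix ι ι ℝ}
    (hA : A.IsHermitian) {lam : ι → ℝ} (h : A.charpoly = ∏ i, (X - C (lam i))) (f : ℝ → ℝ) :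
    ∏ i, f (hA.eigenvalues i) = ∏ i, f (lam i) := by
  have := congrArg (fun s => (s.map f).prod) (hA.map_eigenvalues_eq_of_charpoly h)
  rwa [Multiset.map_map, Multiset.map_map] at this

theorem Matrix.IsHermitian.posSemidef_sub_smul_one_of_charpoly {A : Matrix ι ι ℝ}
    (hA : A.IsHermitian) {lam : ι → ℝ} (h : A.charpoly = ∏ i, (X - C (lam i))) {c : ℝ}
    (hc : ∀ i, c ≤ lam i) : (A - c • (1 : Matrix ι ι ℝ)).PosSemidef := by
  have hle : ∀ i, c ≤ hA.eigenvalues i := fun i => by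
    have hmem : hA.eigenvalues i ∈ Multiset.map lam Finset.univ.val :=
      hA.map_eigenvalues_eq_of_charpoly h ▸ Multiset.mem_map_of_mem _ (Finset.mem_univ i)
    obtain ⟨j, -, hj⟩ := Multiset.mem_map.1 hmem
    exact hj ▸ hc j
  have := hA.posSemidef_spectralMap_sub (f := fun _ => c) (g := id) hle
  rwa [hA.spectralMap_id, hA.spectralMap_const] at this

/-- A principal minor of a positive definite matrix is at most the product of equally many of its
largest eigenvalues, indexed here by `T`. -/
theorem Matrix.PosDef.det_submatrix_le_prod {A : Matrix ι ι ℝ} (hA : A.PosDef) {lam : ι → ℝ}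
    (h : A.charpoly = ∏ i, (X - C (lam i))) {c : ℝ} (hc : 0 < c) {R T : Finset ι}
    (hcard : R.card = T.card) (hT : ∀ i ∈ T, c ≤ lam i) (hTc : ∀ i ∉ T, lam i ≤ c) :
    (A.submatrix (Subtype.val : R → ι) Subtype.val).det ≤ ∏ i ∈ T, lam i := by
  set M := hA.isHermitian.spectralMap (max c) with hM
  have hMA : (M - A).PosSemidef := by
    have := hA.isHermitian.posSemidef_spectralMap_sub (f := id) (g := max c)
      fun i => le_max_right _ _
    rwa [hA.isHermitian.spectralMap_id] at this
  have hMc : (M - c • (1 : Matrix ι ι ℝ)).PosSemidef := by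
    have := hA.isHermitian.posSemidef_spectralMap_sub (f := fun _ => c) (g := max c)
      fun i => le_max_left _ _
    rwa [hA.isHermitian.spectralMap_const] at this
  have hdetM : M.det = (∏ i ∈ T, lam i) * c ^ Tᶜ.card := by
    rw [hM, IsHermitian.det_spectralMap, hA.isHermitian.prod_eigenvalues_eq_of_charpoly h,
      ← Finset.prod_mul_prod_compl T, Finset.prod_congr rfl fun i hi => max_eq_right (hT i hi),
      Finset.prod_congr rfl fun i hi => max_eq_left (hTc i (Finset.mem_compl.1 hi)),
      Finset.prod_const]
  let e : R ⊕ (Rᶜ : Finset ι) → ι := Sum.elim Subtype.val Subtype.val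
  have hinj : Function.Injective e := Subtype.val_injective.sumElim Subtype.val_injective
    fun a b hab => Finset.mem_compl.1 b.2 (hab ▸ a.2)
  have hsurj : Function.Surjective e := fun i => by
    by_cases hi : i ∈ R
    · exact ⟨Sum.inl ⟨i, hi⟩, rfl⟩
    · exact ⟨Sum.inr ⟨i, Finset.mem_compl.2 hi⟩, rfl⟩
  have hle := mul_pow_card_le_det_submatrix_sumElim hc hMc hinj
  have heq : (M.submatrix e e).det = M.det :=
    det_submatrix_equiv_self (Equiv.ofBijective e ⟨hinj, hsurj⟩) M
  rw [heq, hdetM, Fintype.card_coe, Finset.card_compl, Finset.card_compl, hcard] at hle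
  exact ((hA.submatrix Subtype.val_injective).det_le_det (hMA.submatrix _)).trans
    (le_of_mul_le_mul_right hle (pow_pos hc _))

end HermitianMatrices

/-- If `t ≥ m (l - 1)` and `D - 1 ≤ t D`, where `D` is at most the product of the `m` largest of `K`
numbers with product `P` and all at least `l`, then `K (l - 1) (D - 1) ≤ t (P - 1)`. -/
theorem mul_sub_one_le_mul_sub_one {D t l P : ℝ} {m K : ℕ} (hmK : m ≤ K) (hl : 1 < l) (hD : 0 ≤ D)
    (ht : m * (l - 1) ≤ t) (hDt : D - 1 ≤ t * D) (hDP : D * l ^ (K - m) ≤ P) (hP : 1 ≤ P) :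
    K * (l - 1) * (D - 1) ≤ t * (P - 1) := by
  have hm : (0 : ℝ) ≤ m * (l - 1) := mul_nonneg (Nat.cast_nonneg _) (by linarith)
  have hK : (0 : ℝ) ≤ K * (l - 1) := mul_nonneg (Nat.cast_nonneg _) (by linarith)
  have ht0 : 0 ≤ t := hm.trans ht
  rcases le_total D 1 with h1 | h1
  · exact (mul_nonpos_of_nonneg_of_nonpos hK (by linarith)).trans (mul_nonneg ht0 (by linarith))
  · have hbern := one_add_mul_sub_le_pow (a := l) (by linarith) (K - m)
    rw [Nat.cast_sub hmK] at hbern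
    have hP' : D + D * ((K - m) * (l - 1)) ≤ P := by
      have := mul_le_mul_of_nonneg_left hbern hD
      linarith
    have hKm : (0 : ℝ) ≤ (K - m) * (l - 1) :=
      mul_nonneg (sub_nonneg.2 (Nat.cast_le.2 hmK)) (by linarith)
    have e1 := mul_le_mul_of_nonneg_right ht (sub_nonneg.2 h1)
    have e2 := mul_le_mul_of_nonneg_right hDt hKm
    have e3 := mul_le_mul_of_nonneg_left hP' ht0
    linarith

theorem detObjA_eq_det_submatrix (n : ℕ) (σ : ℝ) (Sig : Matrix (Fin n) (Fin n) ℝ)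
    {α : Type*} [Fintype α] [DecidableEq α] {e : α → Fin n} (he : Function.Injective e)
    {T : Finset (Fin n)} (hT : ∀ i, i ∈ T ↔ ∃ a, e a = i) :
    detObjA n σ Sig T = ((detMat n σ Sig).submatrix e e).det := by
  let e' : α → T := fun a => ⟨e a, (hT _).2 ⟨a, rfl⟩⟩
  have hbij : Function.Bijective e' :=
    ⟨fun a b hab => he (congrArg Subtype.val hab), fun i => by
      obtain ⟨a, ha⟩ := (hT i).1 i.2
      exact ⟨a, Subtype.ext ha⟩⟩
  exact (det_submatrix_equiv_self (Equiv.ofBijective e' hbij) _).symm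

/-- **Submodularity-ratio bound for the determinantal function.** Let `Σ` be
positive definite, `σ > 0`, and let `lam : Fin n → ℝ` list the eigenvalues
`λ_1 ≥ ⋯ ≥ λ_n > 1` of `A = I + σ⁻²Σ` (i.e. `charpoly A = Π (X − λ_i)`). Then
for every `1 ≤ K ≤ n` and all `S, Ω` with `0 < |Ω\S| ≤ K`:
`Σ_{ω∈Ω\S} ρ_ω(S) ≥ (K(λ_n − 1)/(Π_{j=1}^K λ_j − 1))·ρ_Ω(S)`; in particular
the greedy submodularity ratio for budget `K` is at least this quantity. -/
theorem detObjA_greedy_submodularity_ratio (n : ℕ) (σ : ℝ) (hσ : 0 < σ)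
    (Sig : Matrix (Fin n) (Fin n) ℝ) (hSig : Sig.PosDef)
    (lam : Fin n → ℝ)
    (hsorted : ∀ i j : Fin n, i ≤ j → lam j ≤ lam i)
    (hgt : ∀ i : Fin n, 1 < lam i)
    (hchar : (detMat n σ Sig).charpoly = ∏ i : Fin n, (X - C (lam i)))
    (K : ℕ) (hK1 : 1 ≤ K) (hKn : K ≤ n) :
    ∀ S Ω : Finset (Fin n), (Ω \ S).card ≤ K → (Ω \ S).Nonempty →
      ∑ ω ∈ Ω \ S, (detObjA n σ Sig (insert ω S) - detObjA n σ Sig S) ≥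
        ((K : ℝ) * (lam ⟨n - 1, by omega⟩ - 1) /
            ((∏ j ∈ Finset.univ.filter (fun j : Fin n => (j : ℕ) < K), lam j) - 1)) *
          (detObjA n σ Sig (S ∪ Ω) - detObjA n σ Sig S) := by
  intro S Ω hcard hne
  set A := detMat n σ Sig with hAdef
  set l := lam ⟨n - 1, by omega⟩ with hl
  have hl1 : 1 < l := hgt _
  have hl0 : 0 < l := by linarith
  have hA : A.PosDef := PosDef.one.add (hSig.smul (inv_pos.2 (pow_pos hσ 2)))
  have hlam : ∀ i, l ≤ lam i := fun i => hsorted _ _ (Fin.le_def.2 (by simp; omega))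
  have hAl : (A - l • (1 : Matrix (Fin n) (Fin n) ℝ)).PosSemidef :=
    hA.isHermitian.posSemidef_sub_smul_one_of_charpoly hchar hlam
  set R := Ω \ S with hR
  let f : S → Fin n := Subtype.val
  let g : R → Fin n := Subtype.val
  have hf : Function.Injective f := Subtype.val_injective
  have hnotin : ∀ ω ∈ R, ω ∉ S := fun ω hω => (Finset.mem_sdiff.1 hω).2
  have hfg : Function.Injective (Sum.elim f g) := hf.sumElim Subtype.val_injective
    fun a b hab => hnotin _ b.2 ((show (a : Fin n) = b from hab) ▸ a.2)
  set B := A.schurComplement f g with hB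
  have hBl : (B - l • (1 : Matrix R R ℝ)).PosSemidef :=
    posSemidef_schurComplement_sub_smul_one hl0 hAl hfg
  have hBpos : B.PosDef := posDef_of_posSemidef_sub_smul_one hl0 hBl
  have hFS : 0 < detObjA n σ Sig S := (hA.submatrix hf).det_pos
  have hunion : detObjA n σ Sig (S ∪ Ω) = detObjA n σ Sig S * B.det := by
    rw [detObjA_eq_det_submatrix n σ Sig hfg, hA.det_submatrix_sumElim hf]
    · rfl
    · intro i
      rw [← Finset.union_sdiff_self_eq_union]
      simp [f, g, ← hR]
  have hinsert : ∀ ω : R, detObjA n σ Sig (insert (ω : Fin n) S) = detObjA n σ Sig S * B ω ω := by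
    intro ω
    have hinj : Function.Injective (Sum.elim f fun _ : Unit => (ω : Fin n)) :=
      hf.sumElim (Function.injective_of_subsingleton _)
        fun a _ hab => hnotin _ ω.2 ((show (a : Fin n) = ω from hab) ▸ a.2)
    rw [detObjA_eq_det_submatrix n σ Sig hinj, hA.det_submatrix_sumElim hf,
      det_unique (A.schurComplement f _)]
    · rfl
    · intro i
      simp [f, or_comm, eq_comm]
  have hsum : ∑ ω ∈ R, (detObjA n σ Sig (insert ω S) - detObjA n σ Sig S) =
      detObjA n σ Sig S * (B.trace - R.card) := by
    rw [← Finset.sum_coe_sort R, Finset.sum_congr rfl fun ω _ => by rw [hinsert ω],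
      Finset.sum_sub_distrib, ← Finset.mul_sum, mul_sub]
    simp [Matrix.trace, mul_comm]
  set I : ℕ → Finset (Fin n) := fun m => Finset.univ.filter fun j : Fin n => (j : ℕ) < m with hI
  have hIcard : ∀ m ≤ n, (I m).card = m := fun m hm => by
    simp [hI, Fin.card_filter_val_lt, hm]
  have hm0 : 0 < R.card := hne.card_pos
  have hdetB : B.det ≤ ∏ j ∈ I R.card, lam j := by
    have h1 : B.det ≤ (A.submatrix g g).det :=
      hBpos.det_le_det (hA.posSemidef_sub_schurComplement hf g)
    refine h1.trans (hA.det_submatrix_le_prod hchar (c := lam ⟨R.card - 1, by omega⟩)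
      (by linarith [hgt ⟨R.card - 1, by omega⟩]) (hIcard _ (by omega)).symm
      (fun i hi => ?_) fun i hi => ?_)
    · refine hsorted _ _ (Fin.le_def.2 ?_)
      simp [hI] at hi ⊢
      omega
    · refine hsorted _ _ (Fin.le_def.2 ?_)
      simp [hI] at hi ⊢
      omega
  have hprod : B.det * l ^ (K - R.card) ≤ ∏ j ∈ I K, lam j := by
    have hsub : I R.card ⊆ I K := fun j hj => by
      simp [hI] at hj ⊢
      omega
    have hpow : l ^ (K - R.card) ≤ ∏ j ∈ I K \ I R.card, lam j := by
      have hc : (I K \ I R.card).card = K - R.card := by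
        rw [Finset.card_sdiff_of_subset hsub, hIcard K hKn, hIcard _ (by omega)]
      rw [← hc, ← Finset.prod_const]
      exact Finset.prod_le_prod (fun _ _ => hl0.le) fun i _ => hlam i
    rw [← Finset.prod_sdiff hsub, mul_comm]
    exact mul_le_mul hpow hdetB hBpos.det_pos.le
      (Finset.prod_nonneg fun i _ => hl0.le.trans (hlam i))
  have hP : 1 < ∏ j ∈ I K, lam j := by
    have h0 : (I K).Nonempty := ⟨⟨0, by omega⟩, by simp [hI]; omega⟩
    calc (1 : ℝ) = ∏ j ∈ I K, (1 : ℝ) := by simp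
      _ < ∏ j ∈ I K, lam j := Finset.prod_lt_prod_of_nonempty (fun _ _ => one_pos)
          (fun i _ => hgt i) h0
  have htrace : R.card * (l - 1) ≤ B.trace - R.card := by
    have := hBl.trace_nonneg
    rw [trace_sub, trace_smul, trace_one, Fintype.card_coe, smul_eq_mul] at this
    linarith
  have hDt := hBpos.det_sub_one_le
  rw [Fintype.card_coe] at hDt
  have hmain := mul_sub_one_le_mul_sub_one hcard hl1 hBpos.det_pos.le htrace hDt hprod hP.le
  rw [hsum, hunion, ge_iff_le, div_mul_eq_mul_div, div_le_iff₀ (sub_pos.2 hP)]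
  have := mul_le_mul_of_nonneg_left hmain hFS.le
  linarith
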